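/- Assume in addition that Ω is convex (so that d_H is continuous on Ω̄ × Ω̄). Let ρ ∈ L¹(Ω) with positive and negative parts ρ⁺, ρ⁻, and let u : Ω̄ → ℝ be a bounded Borel function satisfying u(y) − u(x) ≤ d_H(x,y) for all x,y ∈ Ω̄ and φ ≤ u ≤ ψ on ∂Ω. Let γ be a finite positive Borel measure on Ω̄ × Ω̄ whose first marginal μ₁ := (π_x)_#γ satisfies μ₁ restricted to Ω equals the measure ρ⁺·λ on Ω, and whose second marginal μ₂ := (π_y)_#γ satisfies μ₂ restricted to Ω equals ρ⁻·λ on Ω, where λ denotes Lebesgue measure. Then the weak duality inequality holds: ∫_Ω u(x) ρ(x) dλ(x) ≤ ∫_{Ω̄×Ω̄} d_H(y,x) dγ(x,y) + ∫_{∂Ω} ψ d(μ₂ restricted to ∂Ω) − ∫_{∂Ω} φ d(μ₁ restricted to ∂Ω). -/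

import Mathlib

/-!
Integrating `u x - u y ≤ d_H(y, x)` against `γ` gives `∫ u dμ₁ - ∫ u dμ₂ ≤ ∫ d_H(y, x) dγ`.
Both marginals live on `closure Ω = Ω ∪ ∂Ω`; on `Ω` their difference is `ρ dx`, and on `∂Ω`
the obstacle bounds `φ ≤ u ≤ ψ` replace `u` by `φ` and `ψ`.

The Bochner integral of `d_H` is only meaningful once `d_H` is known to be `γ`-integrable, and
this is where convexity enters. Segments show `d_H(x, y) ≤ b ‖y - x‖`
(`finslerDist_le_segment`), so `d_H` is finite and bounded; with the triangle inequality
(`finslerDist_triangle`, by concatenation of curves) this makes `d_H` continuous on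
`closure Ω ×ˢ closure Ω` (`continuousOn_finslerDist`).
-/

open MeasureTheory ENNReal NNReal

/-- The intrinsic (Finsler) distance associated with a Finsler metric `H` on a set `S`:
the infimum of the lengths `∫₀¹ H(ξ(t), ξ'(t)) dt` over Lipschitz curves `ξ` joining
`x` to `y` inside `S` (valued in `ℝ≥0∞`; it is `∞` when no such curve exists). -/
noncomputable def finslerDist {N : ℕ}
    (H : EuclideanSpace ℝ (Fin N) → EuclideanSpace ℝ (Fin N) → ℝ)
    (S : Set (EuclideanSpace ℝ (Fin N))) (x y : EuclideanSpace ℝ (Fin N)) : ℝ≥0∞ :=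
  sInf {c : ℝ≥0∞ | ∃ ξ : ℝ → EuclideanSpace ℝ (Fin N),
    (∃ K : NNReal, LipschitzOnWith K ξ (Set.Icc 0 1)) ∧
    (∀ t ∈ Set.Icc (0 : ℝ) 1, ξ t ∈ S) ∧ ξ 0 = x ∧ ξ 1 = y ∧
    c = ENNReal.ofReal (∫ t in (0 : ℝ)..1, H (ξ t) (deriv ξ t))}

/-- The speed `t ↦ H (ξ t) (ξ' t)` of a Lipschitz curve is integrable: it is measurable and
bounded by `b` times the Lipschitz constant. -/
lemma intervalIntegrable_speed {N : ℕ}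
    {H : EuclideanSpace ℝ (Fin N) → EuclideanSpace ℝ (Fin N) → ℝ}
    {S : Set (EuclideanSpace ℝ (Fin N))} {b : ℝ} (hb : 0 ≤ b)
    (Hcont : ContinuousOn
      (fun q : EuclideanSpace ℝ (Fin N) × EuclideanSpace ℝ (Fin N) => H q.1 q.2)
      (S ×ˢ Set.univ))
    (Hbd : ∀ x ∈ S, ∀ p, 0 ≤ H x p ∧ H x p ≤ b * ‖p‖)
    {ξ : ℝ → EuclideanSpace ℝ (Fin N)} {K : NNReal} (hξ : LipschitzOnWith K ξ (Set.Icc 0 1))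
    (hξS : ∀ t ∈ Set.Icc (0 : ℝ) 1, ξ t ∈ S) :
    IntervalIntegrable (fun t => H (ξ t) (deriv ξ t)) volume 0 1 := by
  rw [intervalIntegrable_iff_integrableOn_Ioo_of_le zero_le_one]
  refine Integrable.of_bound ?_ (b * K) ?_
  · -- freezing the curve outside `[0, 1]` makes it continuous with values in `S` everywhere
    set ξ' : ℝ → EuclideanSpace ℝ (Fin N) := fun t => ξ (Set.projIcc 0 1 zero_le_one t)
      with hξ'
    have hc : Continuous ξ' :=
      (continuousOn_iff_continuous_domRestrict.1 hξ.continuousOn).comp continuous_projIcc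
    have hm : Measurable (fun t : ℝ =>
        (⟨(ξ' t, deriv ξ t), ⟨hξS _ (Subtype.prop _), Set.mem_univ _⟩⟩ :
          (S ×ˢ Set.univ : Set (EuclideanSpace ℝ (Fin N) × EuclideanSpace ℝ (Fin N))))) :=
      (hc.measurable.prodMk (measurable_deriv ξ)).subtype_mk
    have hm2 := (continuousOn_iff_continuous_domRestrict.1 Hcont).measurable.comp hm
    refine hm2.aestronglyMeasurable.congr ?_
    filter_upwards [ae_restrict_mem measurableSet_Ioo] with t ht
    have : ξ' t = ξ t := by
      simp only [hξ']
      rw [Set.projIcc_of_mem zero_le_one (Set.Ioo_subset_Icc_self ht)]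
    simp [this]
  · filter_upwards [ae_restrict_mem measurableSet_Ioo] with t ht
    have h1 := Hbd _ (hξS t (Set.Ioo_subset_Icc_self ht)) (deriv ξ t)
    have h2 : ‖deriv ξ t‖ ≤ K :=
      norm_deriv_le_of_lipschitzOn (Icc_mem_nhds ht.1 ht.2) hξ
    rw [Real.norm_of_nonneg h1.1]
    exact h1.2.trans (mul_le_mul_of_nonneg_left h2 hb)

lemma finslerDist_le_segment {N : ℕ}
    {H : EuclideanSpace ℝ (Fin N) → EuclideanSpace ℝ (Fin N) → ℝ}
    {S : Set (EuclideanSpace ℝ (Fin N))} (hS : Convex ℝ S) {b : ℝ}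
    (Hbd : ∀ x ∈ S, ∀ p, 0 ≤ H x p ∧ H x p ≤ b * ‖p‖)
    {x y : EuclideanSpace ℝ (Fin N)} (hx : x ∈ S) (hy : y ∈ S) :
    finslerDist H S x y ≤ ENNReal.ofReal (b * ‖y - x‖) := by
  have hmem : ∀ t ∈ Set.Icc (0 : ℝ) 1, AffineMap.lineMap x y t ∈ S := fun t ht =>
    hS.lineMap_mem hx hy ht
  unfold finslerDist
  refine sInf_le_of_le ⟨AffineMap.lineMap x y, ⟨_, (lipschitzWith_lineMap x y).lipschitzOnWith⟩,
    hmem, by simp, by simp, rfl⟩ (ENNReal.ofReal_le_ofReal ?_)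
  have hd : ∀ t : ℝ, deriv (AffineMap.lineMap x y : ℝ → EuclideanSpace ℝ (Fin N)) t = y - x :=
    fun t => (AffineMap.hasDerivAt_lineMap).deriv
  simp only [hd]
  have := intervalIntegral.norm_integral_le_of_norm_le_const (a := (0 : ℝ)) (b := 1)
    (C := b * ‖y - x‖) (f := fun t => H (AffineMap.lineMap x y t) (y - x)) (by
      intro t ht
      rw [Set.uIoc_of_le zero_le_one] at ht
      have h1 := Hbd _ (hmem t (Set.Ioc_subset_Icc_self ht)) (y - x)
      rw [Real.norm_of_nonneg h1.1]
      exact h1.2)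
  simpa using (le_abs_self _).trans this

/-- Triangle inequality for the intrinsic distance: two curves are concatenated after running
each of them at double speed, which leaves the lengths unchanged by homogeneity of `H`. -/
lemma finslerDist_triangle {N : ℕ}
    {H : EuclideanSpace ℝ (Fin N) → EuclideanSpace ℝ (Fin N) → ℝ}
    {S : Set (EuclideanSpace ℝ (Fin N))} {b : ℝ} (hb : 0 ≤ b)
    (Hcont : ContinuousOn
      (fun q : EuclideanSpace ℝ (Fin N) × EuclideanSpace ℝ (Fin N) => H q.1 q.2)
      (S ×ˢ Set.univ))
    (Hhom : ∀ x ∈ S, ∀ t : ℝ, 0 ≤ t → ∀ p, H x (t • p) = t * H x p)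
    (Hbd : ∀ x ∈ S, ∀ p, 0 ≤ H x p ∧ H x p ≤ b * ‖p‖)
    (x y z : EuclideanSpace ℝ (Fin N)) :
    finslerDist H S x z ≤ finslerDist H S x y + finslerDist H S y z := by
  unfold finslerDist
  rw [ENNReal.sInf_add]
  refine le_iInf₂ fun c hc => ?_
  rw [add_comm, ENNReal.sInf_add]
  refine le_iInf₂ fun d hd => ?_
  obtain ⟨ξ, ⟨K, hK⟩, hξS, hξ0, hξ1, rfl⟩ := hc
  obtain ⟨η, ⟨L, hL⟩, hηS, hη0, hη1, rfl⟩ := hd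
  have hIξ := intervalIntegrable_speed hb Hcont Hbd hK hξS
  have hIη := intervalIntegrable_speed hb Hcont Hbd hL hηS
  -- a sum of two Lipschitz curves, one of which stands still on each half of `[0, 1]`
  set ζ : ℝ → EuclideanSpace ℝ (Fin N) :=
    fun t => ξ (min (2 * t) 1) + η (max (2 * t - 1) 0) - y with hζ
  have hζl : ∀ t ≤ (1 / 2 : ℝ), ζ t = ξ (2 * t) := by
    intro t ht
    simp only [hζ]
    rw [min_eq_left (by linarith), max_eq_right (by linarith), hη0, add_sub_cancel_right]
  have hζr : ∀ t ≥ (1 / 2 : ℝ), ζ t = η (2 * t - 1) := by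
    intro t ht
    simp only [hζ]
    rw [min_eq_right (by linarith), max_eq_left (by linarith), hξ1, add_sub_cancel_left]
  have hζLip : ∃ M : NNReal, LipschitzOnWith M ζ (Set.Icc 0 1) := by
    have h2 : LipschitzWith 2 (fun t : ℝ => 2 * t) :=
      LipschitzWith.of_dist_le_mul fun s t => by
        rw [Real.dist_eq, Real.dist_eq, ← mul_sub, abs_mul]; simp
    have h3 : LipschitzWith 2 (fun t : ℝ => 2 * t - 1) :=
      LipschitzWith.of_dist_le_mul fun s t => by
        rw [Real.dist_eq, Real.dist_eq, sub_sub_sub_cancel_right, ← mul_sub, abs_mul]; simp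
    have hA : LipschitzOnWith (K * 2) (ξ ∘ fun t : ℝ => min (2 * t) 1) (Set.Icc 0 1) :=
      hK.comp (h2.min_const 1).lipschitzOnWith fun t ht =>
        ⟨le_min (by linarith [ht.1]) zero_le_one, min_le_right _ _⟩
    have hB : LipschitzOnWith (L * 2) (η ∘ fun t : ℝ => max (2 * t - 1) 0) (Set.Icc 0 1) :=
      hL.comp (h3.max_const 0).lipschitzOnWith fun t ht =>
        ⟨le_max_right _ _, max_le (by linarith [ht.2]) zero_le_one⟩
    exact ⟨_, (hA.add hB).sub (LipschitzWith.const y).lipschitzOnWith⟩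
  have hζS : ∀ t ∈ Set.Icc (0 : ℝ) 1, ζ t ∈ S := by
    intro t ht
    rcases le_total t (1 / 2) with h | h
    · rw [hζl t h]; exact hξS _ ⟨by linarith [ht.1], by linarith⟩
    · rw [hζr t h]; exact hηS _ ⟨by linarith, by linarith [ht.2]⟩
  obtain ⟨M, hM⟩ := hζLip
  have hIζ := intervalIntegrable_speed hb Hcont Hbd hM hζS
  have hhalf : (1 / 2 : ℝ) ∈ Set.uIcc (0 : ℝ) 1 := by
    rw [Set.uIcc_of_le zero_le_one]; norm_num
  have hsplit : (∫ t in (0 : ℝ)..1, H (ζ t) (deriv ζ t)) =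
      (∫ t in (0 : ℝ)..1, H (ξ t) (deriv ξ t)) + ∫ t in (0 : ℝ)..1, H (η t) (deriv η t) := by
    rw [← intervalIntegral.integral_add_adjacent_intervals
      (hIζ.mono_set (Set.uIcc_subset_uIcc_left hhalf))
      (hIζ.mono_set (Set.uIcc_subset_uIcc_right hhalf))]
    congr 1
    · have : (∫ t in (0 : ℝ)..(1 / 2), H (ζ t) (deriv ζ t)) =
          ∫ t in (0 : ℝ)..(1 / 2), 2 * H (ξ (2 * t)) (deriv ξ (2 * t)) := by
        refine intervalIntegral.integral_congr_Ioo_of_le (by norm_num) fun t ht => ?_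
        have he : ζ =ᶠ[nhds t] fun s => ξ (2 * s) := by
          filter_upwards [Iio_mem_nhds ht.2] with s hs using hζl s (le_of_lt hs)
        rw [he.deriv_eq, deriv_comp_mul_left, hζl t ht.2.le,
          Hhom _ (hξS _ ⟨by linarith [ht.1], by linarith [ht.2]⟩) 2 zero_le_two]
      rw [this, intervalIntegral.integral_const_mul,
        intervalIntegral.mul_integral_comp_mul_left (f := fun t => H (ξ t) (deriv ξ t))]
      norm_num
    · have : (∫ t in (1 / 2 : ℝ)..1, H (ζ t) (deriv ζ t)) =
          ∫ t in (1 / 2 : ℝ)..1, 2 * H (η (2 * t - 1)) (deriv η (2 * t - 1)) := by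
        refine intervalIntegral.integral_congr_Ioo_of_le (by norm_num) fun t ht => ?_
        have he : ζ =ᶠ[nhds t] fun s => η (2 * s - 1) := by
          filter_upwards [Ioi_mem_nhds ht.1] with s hs using hζr s (le_of_lt hs)
        have hd : deriv (fun s => η (2 * s - 1)) t = (2 : ℝ) • deriv η (2 * t - 1) := by
          rw [deriv_comp_mul_left 2 (fun s => η (s - 1)) t, deriv_comp_sub_const]
        rw [he.deriv_eq, hd, hζr t ht.1.le,
          Hhom _ (hηS _ ⟨by linarith [ht.1], by linarith [ht.2]⟩) 2 zero_le_two]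
      rw [this, intervalIntegral.integral_const_mul,
        intervalIntegral.mul_integral_comp_mul_sub (f := fun t => H (η t) (deriv η t))]
      norm_num
  have hpos : ∀ {θ : ℝ → EuclideanSpace ℝ (Fin N)}, (∀ t ∈ Set.Icc (0 : ℝ) 1, θ t ∈ S) →
      0 ≤ ∫ t in (0 : ℝ)..1, H (θ t) (deriv θ t) := fun hθ =>
    intervalIntegral.integral_nonneg zero_le_one fun t ht => (Hbd _ (hθ t ht) _).1
  refine sInf_le ⟨ζ, ⟨M, hM⟩, hζS, ?_, ?_, ?_⟩
  · rw [hζl 0 (by norm_num)]; simpa using hξ0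
  · rw [hζr 1 (by norm_num)]; norm_num; exact hη1
  · rw [hsplit, ENNReal.ofReal_add (hpos hξS) (hpos hηS), add_comm]

/-- On a convex set the intrinsic distance is Lipschitz in both variables jointly. -/
lemma continuousOn_finslerDist {N : ℕ}
    {H : EuclideanSpace ℝ (Fin N) → EuclideanSpace ℝ (Fin N) → ℝ}
    {S : Set (EuclideanSpace ℝ (Fin N))} (hSc : Convex ℝ S)
    {b : ℝ} (hb : 0 ≤ b)
    (Hcont : ContinuousOn
      (fun q : EuclideanSpace ℝ (Fin N) × EuclideanSpace ℝ (Fin N) => H q.1 q.2)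
      (S ×ˢ Set.univ))
    (Hhom : ∀ x ∈ S, ∀ t : ℝ, 0 ≤ t → ∀ p, H x (t • p) = t * H x p)
    (Hbd : ∀ x ∈ S, ∀ p, 0 ≤ H x p ∧ H x p ≤ b * ‖p‖) :
    ContinuousOn (fun p : EuclideanSpace ℝ (Fin N) × EuclideanSpace ℝ (Fin N) =>
      (finslerDist H S p.1 p.2).toReal) (S ×ˢ S) := by
  have hfin : ∀ x ∈ S, ∀ y ∈ S, finslerDist H S x y ≠ ∞ := fun x hx y hy =>
    ((finslerDist_le_segment hSc Hbd hx hy).trans_lt ENNReal.ofReal_lt_top).ne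
  have hseg : ∀ x ∈ S, ∀ y ∈ S, (finslerDist H S x y).toReal ≤ b * dist x y := by
    intro x hx y hy
    rw [dist_comm, dist_eq_norm]
    exact ENNReal.toReal_le_of_le_ofReal (by positivity) (finslerDist_le_segment hSc Hbd hx hy)
  have htri : ∀ x ∈ S, ∀ y ∈ S, ∀ z ∈ S, (finslerDist H S x z).toReal ≤
      (finslerDist H S x y).toReal + (finslerDist H S y z).toReal := by
    intro x hx y hy z hz
    rw [← ENNReal.toReal_add (hfin x hx y hy) (hfin y hy z hz)]
    exact ENNReal.toReal_mono (ENNReal.add_ne_top.2 ⟨hfin x hx y hy, hfin y hy z hz⟩)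
      (finslerDist_triangle hb Hcont Hhom Hbd x y z)
  refine (LipschitzOnWith.of_le_add_mul (Real.toNNReal (2 * b)) ?_).continuousOn
  rintro ⟨x, y⟩ ⟨hx, hy⟩ ⟨x', y'⟩ ⟨hx', hy'⟩
  simp only at hx hy hx' hy' ⊢
  rw [Real.coe_toNNReal _ (by positivity)]
  have h1 := htri x hx x' hx' y hy
  have h2 := htri x' hx' y' hy' y hy
  have h3 := hseg x hx x' hx'
  have h4 := hseg y' hy' y hy
  rw [dist_comm] at h4
  have h5 : dist x x' ≤ dist (x, y) (x', y') := le_max_left _ _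
  have h6 : dist y y' ≤ dist (x, y) (x', y') := le_max_right _ _
  nlinarith [mul_le_mul_of_nonneg_left h5 hb, mul_le_mul_of_nonneg_left h6 hb]

/-- If `μ` is carried by `closure Ω`, its integral splits into the interior part, where `μ` has
density `f⁺`, and the boundary part. -/
lemma integral_eq_density_add_frontier {N : ℕ} {Ω : Set (EuclideanSpace ℝ (Fin N))}
    (hΩ : IsOpen Ω) {μ : Measure (EuclideanSpace ℝ (Fin N))}
    (hμ : μ (closure Ω)ᶜ = 0) {f u : EuclideanSpace ℝ (Fin N) → ℝ}
    (hf : AEMeasurable f (volume.restrict Ω)) (hu : Integrable u μ)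
    (hμΩ : μ.restrict Ω =
      (volume.restrict Ω).withDensity (fun x => ENNReal.ofReal (max (f x) 0))) :
    ∫ x, u x ∂μ = (∫ x in Ω, max (f x) 0 * u x) + ∫ x in frontier Ω, u x ∂μ := by
  have h1 : ∫ x, u x ∂μ = ∫ x in Ω ∪ frontier Ω, u x ∂μ := by
    rw [← closure_eq_self_union_frontier, Measure.restrict_eq_self_of_ae_mem]
    exact hμ
  have hd : Disjoint Ω (frontier Ω) := by
    rw [hΩ.frontier_eq]; exact Set.disjoint_sdiff_right
  rw [h1, setIntegral_union hd isClosed_frontier.measurableSet hu.integrableOn hu.integrableOn,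
    hμΩ, integral_withDensity_eq_integral_toReal_smul₀ (hf.max aemeasurable_const).ennreal_ofReal
      (by simp)]
  simp [ENNReal.toReal_ofReal']


/-- weak duality between the obstacle Kantorovich–Rubinstein problem and
the Kantorovich problem with boundary costs `φ, ψ`: for every admissible potential `u`
and every admissible plan `γ`,
`∫_Ω u ρ ≤ ∫ d_H(y,x) dγ(x,y) + ∫_∂Ω ψ dμ₂ − ∫_∂Ω φ dμ₁`. -/
theorem weak_duality_obstacle_kantorovich (N : ℕ) (hN : 1 ≤ N)
    (Ω : Set (EuclideanSpace ℝ (Fin N)))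
    (hΩne : Ω.Nonempty) (hΩop : IsOpen Ω) (hΩbd : Bornology.IsBounded Ω)
    (hΩconv : Convex ℝ Ω)
    (a b : ℝ) (ha : 0 < a) (hab : a ≤ b)
    (H : EuclideanSpace ℝ (Fin N) → EuclideanSpace ℝ (Fin N) → ℝ)
    (Hcont : ContinuousOn
      (fun q : EuclideanSpace ℝ (Fin N) × EuclideanSpace ℝ (Fin N) => H q.1 q.2)
      (closure Ω ×ˢ Set.univ))
    (Hconv : ∀ x ∈ closure Ω, ConvexOn ℝ Set.univ (H x))
    (Hhom : ∀ x ∈ closure Ω, ∀ t : ℝ, 0 ≤ t → ∀ p, H x (t • p) = t * H x p)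
    (Hbd : ∀ x ∈ closure Ω, ∀ p, a * ‖p‖ ≤ H x p ∧ H x p ≤ b * ‖p‖)
    (φ ψ : EuclideanSpace ℝ (Fin N) → ℝ)
    (hφ : ContinuousOn φ (frontier Ω)) (hψ : ContinuousOn ψ (frontier Ω))
    (hcompat : ∀ x ∈ frontier Ω, ∀ y ∈ frontier Ω,
      ENNReal.ofReal (φ x - ψ y) ≤ finslerDist H (closure Ω) y x)
    -- the data `ρ ∈ L¹(Ω)`
    (ρ : EuclideanSpace ℝ (Fin N) → ℝ)
    (hρ : Integrable ρ (volume.restrict Ω))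
    -- the admissible potential `u`
    (u : EuclideanSpace ℝ (Fin N) → ℝ) (humeas : Measurable u)
    (hubdd : ∃ C : ℝ, ∀ x, |u x| ≤ C)
    (hulip : ∀ x ∈ closure Ω, ∀ y ∈ closure Ω,
      ENNReal.ofReal (u y - u x) ≤ finslerDist H (closure Ω) x y)
    (huobs : ∀ x ∈ frontier Ω, φ x ≤ u x ∧ u x ≤ ψ x)
    -- the admissible transport plan `γ` with its marginals `μ₁, μ₂`
    (γ : Measure (EuclideanSpace ℝ (Fin N) × EuclideanSpace ℝ (Fin N)))
    (hγfin : IsFiniteMeasure γ)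
    (hγsupp : γ ((closure Ω ×ˢ closure Ω)ᶜ) = 0)
    (μ₁ μ₂ : Measure (EuclideanSpace ℝ (Fin N)))
    (hμ₁ : μ₁ = γ.map Prod.fst) (hμ₂ : μ₂ = γ.map Prod.snd)
    (hμ₁Ω : μ₁.restrict Ω =
      (volume.restrict Ω).withDensity (fun x => ENNReal.ofReal (max (ρ x) 0)))
    (hμ₂Ω : μ₂.restrict Ω =
      (volume.restrict Ω).withDensity (fun x => ENNReal.ofReal (max (-ρ x) 0))) :
    (∫ x in Ω, u x * ρ x) ≤
      (∫ p, (finslerDist H (closure Ω) p.2 p.1).toReal ∂γ) +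
        (∫ y in frontier Ω, ψ y ∂μ₂) - (∫ x in frontier Ω, φ x ∂μ₁) := by
  obtain ⟨C, hC⟩ := hubdd
  have hb : 0 ≤ b := ha.le.trans hab
  have Hbd' : ∀ x ∈ closure Ω, ∀ p, 0 ≤ H x p ∧ H x p ≤ b * ‖p‖ := fun x hx p =>
    ⟨(by positivity : 0 ≤ a * ‖p‖).trans (Hbd x hx p).1, (Hbd x hx p).2⟩
  have hcc : Convex ℝ (closure Ω) := hΩconv.closure
  have hcpt : IsCompact (closure Ω) := hΩbd.isCompact_closure
  have hfcpt : IsCompact (frontier Ω) :=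
    hcpt.of_isClosed_subset isClosed_frontier frontier_subset_closure
  have hae : ∀ᵐ p ∂γ, p ∈ closure Ω ×ˢ closure Ω := hγsupp
  have hdint : Integrable (fun p => (finslerDist H (closure Ω) p.2 p.1).toReal) γ := by
    have hcont : ContinuousOn (fun p => (finslerDist H (closure Ω) p.2 p.1).toReal)
        (closure Ω ×ˢ closure Ω) :=
      (continuousOn_finslerDist hcc hb Hcont Hhom Hbd').comp
        continuous_swap.continuousOn fun p hp => ⟨hp.2, hp.1⟩
    have := hcont.integrableOn_compact (μ := γ) (hcpt.prod hcpt)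
    rwa [IntegrableOn, Measure.restrict_eq_self_of_ae_mem hae] at this
  have hfin₁ : IsFiniteMeasure μ₁ := by rw [hμ₁]; infer_instance
  have hfin₂ : IsFiniteMeasure μ₂ := by rw [hμ₂]; infer_instance
  have hu : ∀ (μ : Measure (EuclideanSpace ℝ (Fin N))) [IsFiniteMeasure μ], Integrable u μ :=
    fun μ _ => Integrable.of_bound humeas.aestronglyMeasurable C (ae_of_all _ hC)
  have hs₁ : μ₁ (closure Ω)ᶜ = 0 := by
    rw [hμ₁, Measure.map_apply measurable_fst isClosed_closure.measurableSet.compl]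
    refine measure_mono_null (fun p hp => ?_) hγsupp
    exact fun h => hp h.1
  have hs₂ : μ₂ (closure Ω)ᶜ = 0 := by
    rw [hμ₂, Measure.map_apply measurable_snd isClosed_closure.measurableSet.compl]
    refine measure_mono_null (fun p hp => ?_) hγsupp
    exact fun h => hp h.2
  have e₁ := integral_eq_density_add_frontier hΩop hs₁ hρ.aemeasurable (hu μ₁) hμ₁Ω
  have e₂ := integral_eq_density_add_frontier hΩop hs₂ hρ.neg.aemeasurable (hu μ₂) hμ₂Ω
  have hi₁ : Integrable (fun p : EuclideanSpace ℝ (Fin N) × EuclideanSpace ℝ (Fin N) =>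
      u p.1) γ := (hμ₁ ▸ hu μ₁).comp_measurable measurable_fst
  have hi₂ : Integrable (fun p : EuclideanSpace ℝ (Fin N) × EuclideanSpace ℝ (Fin N) =>
      u p.2) γ := (hμ₂ ▸ hu μ₂).comp_measurable measurable_snd
  have m₁ : ∫ x, u x ∂μ₁ = ∫ p, u p.1 ∂γ := by
    rw [hμ₁, integral_map measurable_fst.aemeasurable humeas.aestronglyMeasurable]
  have m₂ : ∫ x, u x ∂μ₂ = ∫ p, u p.2 ∂γ := by
    rw [hμ₂, integral_map measurable_snd.aemeasurable humeas.aestronglyMeasurable]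
  have hle : (∫ p, u p.1 ∂γ) - ∫ p, u p.2 ∂γ ≤
      ∫ p, (finslerDist H (closure Ω) p.2 p.1).toReal ∂γ := by
    rw [← integral_sub hi₁ hi₂]
    refine integral_mono_ae (hi₁.sub hi₂) hdint ?_
    filter_upwards [hae] with p hp
    have hfin := ((finslerDist_le_segment hcc Hbd' hp.2 hp.1).trans_lt
      ENNReal.ofReal_lt_top).ne
    exact (ENNReal.ofReal_le_iff_le_toReal hfin).1 (hulip _ hp.2 _ hp.1)
  have hφle : ∫ x in frontier Ω, φ x ∂μ₁ ≤ ∫ x in frontier Ω, u x ∂μ₁ :=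
    setIntegral_mono_on (hφ.integrableOn_compact hfcpt) (hu μ₁).integrableOn
      isClosed_frontier.measurableSet fun x hx => (huobs x hx).1
  have hψle : ∫ x in frontier Ω, u x ∂μ₂ ≤ ∫ x in frontier Ω, ψ x ∂μ₂ :=
    setIntegral_mono_on (hu μ₂).integrableOn (hψ.integrableOn_compact hfcpt)
      isClosed_frontier.measurableSet fun x hx => (huobs x hx).2
  have hρsplit : ∫ x in Ω, u x * ρ x =
      (∫ x in Ω, max (ρ x) 0 * u x) - ∫ x in Ω, max ((-ρ) x) 0 * u x := by
    rw [← integral_sub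
      (hρ.pos_part.mul_bdd humeas.aestronglyMeasurable (ae_of_all _ hC))
      (hρ.neg.pos_part.mul_bdd humeas.aestronglyMeasurable (ae_of_all _ hC))]
    refine integral_congr_ae (ae_of_all _ fun x => ?_)
    simp only [Pi.neg_apply]
    rcases le_total (ρ x) 0 with h | h
    · rw [max_eq_right h, max_eq_left (by linarith)]; ring
    · rw [max_eq_left h, max_eq_right (by linarith)]; ring
  linarith
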